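/- Let α ∈ (0,1), λ > 0, c ≥ 0. Let B : [0,∞) → ℝ be a function with B(0) = 0 such that for every ε > 0 and every R > 0, B has Hölder regularity 1/2 − ε on [0, R]. Let X : [0,1] → ℝ be continuous, nondecreasing, with X(0) = 0, satisfying X_t = ∫_0^t s f^{α,λ}(t−s) ds + c ∫_0^t f^{α,λ}(t−s) B(X_s) ds for all t ∈ [0,1]. Then for every ε > 0, the function t ↦ B(X_t) has Hölder regularity (1/2 ∧ α) − ε on [0,1]. -/

import Mathlib

/-!
The proof is a bootstrap on the regularity of `Z = B ∘ X`. The kernel `f^{α,λ}` behaves like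
`r^(α-1)` near `0`: since the Mittag-Leffler function is bounded and Lipschitz on bounded sets
(`mlf_bounds`), `|f(r)| ≤ A r^(α-1)` and `|f(r + h) - f(r)| ≤ A h r^(α-2)` on `(0, 1]`
(`falpha_bounds`). Hence convolution with `f^{α,λ}` turns a `β`-Hölder function vanishing at `0` into an
`(α + β)`-Hölder one when `α + β < 1` (`HolderOn.conv`, resting on `conv_increment`).

If `Z` is `β`-Hölder, the integral equation therefore makes `X` an `(α + β)`-Hölder function, and `Z`
is then `κ (α + β)`-Hölder for every `κ < 1/2`. As long as `b < 1/2 ∧ α`, some admissible `β` at most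
`b` has `(α + β) / 2 > b` (`exists_exponent`), so the supremum of the exponents valid for `Z` cannot
lie below `1/2 ∧ α`.
-/

open MeasureTheory Filter Set

/-- Mittag-Leffler function `E_{a,b}(z) = ∑ z^n / Γ(a n + b)`. -/
noncomputable def mlf (a b z : ℝ) : ℝ := ∑' n : ℕ, z ^ n / Real.Gamma (a * n + b)

/-- `f^{α,λ}(x) = λ x^{α-1} E_{α,α}(-λ x^α)`. -/
noncomputable def falpha (a lam x : ℝ) : ℝ := lam * x ^ (a - 1) * mlf a a (-lam * x ^ a)

/-- Hölder regularity `γ` on a set `S`. -/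
def HolderOn (f : ℝ → ℝ) (γ : ℝ) (S : Set ℝ) : Prop :=
  ∃ C > 0, ∀ x ∈ S, ∀ y ∈ S, |f x - f y| ≤ C * |x - y| ^ γ

/-- Riemann–Liouville fractional integral of order `v` on `[0,1]`. -/
noncomputable def fracInt (v : ℝ) (f : ℝ → ℝ) (x : ℝ) : ℝ :=
  (1 / Real.Gamma v) * ∫ t in (0:ℝ)..x, f t * (x - t) ^ (v - 1)

/-- The kernel integral `x ↦ ∫_0^x f(t) (x-t)^{-v} dt` appearing in the
Riemann–Liouville fractional derivative. -/
noncomputable def rlKer (v : ℝ) (f : ℝ → ℝ) (y : ℝ) : ℝ :=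
  ∫ t in (0:ℝ)..y, f t * (y - t) ^ (-v)

/-- Riemann–Liouville fractional derivative of order `v` on `[0,1]`
(defined when `rlKer v f` is differentiable). -/
noncomputable def fracDeriv (v : ℝ) (f : ℝ → ℝ) (x : ℝ) : ℝ :=
  (1 / Real.Gamma (1 - v)) * derivWithin (rlKer v f) (Set.Icc 0 1) x

/-! ### The Mittag-Leffler function on bounded sets -/

/-- Restricting Euler's integral to `(A, ∞)` shows that `Γ` beats every exponential. -/
lemma gamma_lower {A s : ℝ} (hA : 0 < A) (hs : 1 ≤ s) :
    A ^ (s - 1) * Real.exp (-A) ≤ Real.Gamma s := by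
  rw [Real.Gamma_eq_integral (by linarith)]
  have hint : IntegrableOn (fun x : ℝ => Real.exp (-x) * x ^ (s - 1)) (Ioi 0) :=
    Real.GammaIntegral_convergent (by linarith)
  calc A ^ (s - 1) * Real.exp (-A) = ∫ x in Ioi A, Real.exp (-x) * A ^ (s - 1) := by
        rw [integral_mul_const, integral_exp_neg_Ioi, mul_comm]
    _ ≤ ∫ x in Ioi A, Real.exp (-x) * x ^ (s - 1) := by
        refine setIntegral_mono_on ((integrableOn_exp_neg_Ioi A).mul_const _)
          (hint.mono_set (Ioi_subset_Ioi hA.le)) measurableSet_Ioi fun x hx => ?_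
        gcongr
        exact le_of_lt hx
    _ ≤ ∫ x in Ioi 0, Real.exp (-x) * x ^ (s - 1) := by
        refine setIntegral_mono_set hint ?_ (Ioi_subset_Ioi hA.le).eventuallyLE
        filter_upwards [ae_restrict_mem measurableSet_Ioi] with x hx
        have : (0:ℝ) < x := hx
        positivity

lemma gamma_arg_pos {α : ℝ} (hα : 0 < α) (n : ℕ) : 0 < Real.Gamma (α * n + α) :=
  Real.Gamma_pos_of_pos (by positivity)

/-- The Mittag-Leffler series, and its formal derivative, converge on every ball; the weight `n + 1`
dominates both. -/
lemma summable_coeff {α M : ℝ} (hα : 0 < α) (hM : 0 < M) :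
    Summable fun n : ℕ => ((n : ℝ) + 1) * M ^ n / Real.Gamma (α * n + α) := by
  -- `A` is chosen so that `A^α = 2M`, which makes the `n`-th term `O((n + 1) 2⁻ⁿ)`
  set A : ℝ := (2 * M) ^ (1 / α) with hAdef
  have hA : 0 < A := by positivity
  have hAα : A ^ α = 2 * M := by
    rw [hAdef, ← Real.rpow_mul (by positivity), one_div_mul_cancel hα.ne', Real.rpow_one]
  have hgeo : Summable fun n : ℕ => ((n : ℝ) + 1) * (1 / 2 : ℝ) ^ n := by
    have h1 := summable_pow_mul_geometric_of_norm_lt_one 1 (r := (1 / 2 : ℝ)) (by norm_num)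
    have h0 := summable_pow_mul_geometric_of_norm_lt_one 0 (r := (1 / 2 : ℝ)) (by norm_num)
    refine (h1.add h0).congr fun n => ?_
    ring
  refine Summable.of_norm_bounded_eventually_nat
    (hgeo.mul_left (Real.exp A * A ^ (1 - α))) ?_
  obtain ⟨N, hN⟩ := exists_nat_gt (1 / α)
  filter_upwards [eventually_ge_atTop N] with n hn
  have hn' : 1 ≤ α * n + α := by
    have : 1 / α < n := hN.trans_le (by exact_mod_cast hn)
    rw [div_lt_iff₀ hα] at this
    linarith
  have hG := gamma_lower hA hn'
  have hΓ := gamma_arg_pos hα n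
  rw [Real.norm_of_nonneg (by positivity), div_le_iff₀ hΓ]
  have e : A ^ (α * n + α - 1) = (2 * M) ^ n * A ^ (α - 1) := by
    rw [add_sub_assoc, Real.rpow_add hA, Real.rpow_mul hA.le, hAα, Real.rpow_natCast]
  have e2 : A ^ (1 - α) * A ^ (α - 1) = 1 := by
    rw [← Real.rpow_add hA]; simp
  have e3 : Real.exp A * Real.exp (-A) = 1 := by rw [← Real.exp_add]; simp
  have e4 : (1 / 2 : ℝ) ^ n * (2 * M) ^ n = M ^ n := by
    rw [← mul_pow]; congr 1; ring
  calc ((n : ℝ) + 1) * M ^ n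
      = Real.exp A * A ^ (1 - α) * (((n : ℝ) + 1) * (1 / 2 : ℝ) ^ n) *
          (A ^ (α * n + α - 1) * Real.exp (-A)) := by
        rw [e]
        linear_combination (-((n : ℝ) + 1)) * e4 - ((n : ℝ) + 1) * ((1 / 2 : ℝ) ^ n * (2 * M) ^ n) *
          (e2 * (Real.exp A * Real.exp (-A)) + e3)
    _ ≤ _ := by gcongr

lemma mlf_bounds {α M : ℝ} (hα : 0 < α) (hM : 1 ≤ M) :
    ∃ L > 0, (∀ z, |z| ≤ M → |mlf α α z| ≤ L) ∧
      ∀ z w, |z| ≤ M → |w| ≤ M → |mlf α α z - mlf α α w| ≤ L * |z - w| := by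
  have hs := summable_coeff hα (zero_lt_one.trans_le hM)
  set a : ℕ → ℝ := fun n => ((n : ℝ) + 1) * M ^ n / Real.Gamma (α * n + α) with ha
  have hb : ∀ z, |z| ≤ M → ∀ n : ℕ, ‖z ^ n / Real.Gamma (α * n + α)‖ ≤ a n := by
    intro z hz n
    have hΓ := gamma_arg_pos hα n
    rw [Real.norm_eq_abs, abs_div, abs_of_pos hΓ, abs_pow]
    simp only [ha]
    gcongr
    have := pow_le_pow_left₀ (abs_nonneg z) hz n
    have h2 : 0 ≤ (n : ℝ) * M ^ n := by positivity
    linarith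
  have hz : ∀ z, |z| ≤ M → Summable fun n : ℕ => z ^ n / Real.Gamma (α * n + α) :=
    fun z h => Summable.of_norm_bounded hs (hb z h)
  have ha0 : ∀ n, 0 ≤ a n := fun n => by
    have hΓ := gamma_arg_pos hα n
    positivity
  refine ⟨(∑' n, a n) + 1, add_pos_of_nonneg_of_pos (tsum_nonneg ha0) one_pos, ?_, ?_⟩
  · intro z h
    have := tsum_of_norm_bounded hs.hasSum (hb z h)
    rw [Real.norm_eq_abs] at this
    unfold mlf
    linarith
  · intro z w h h'
    have key : ∀ n : ℕ, ‖z ^ n / Real.Gamma (α * n + α) - w ^ n / Real.Gamma (α * n + α)‖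
        ≤ a n * |z - w| := by
      intro n
      have hΓ := gamma_arg_pos hα n
      rw [← sub_div, Real.norm_eq_abs, abs_div, abs_of_pos hΓ]
      simp only [ha]
      rw [div_mul_eq_mul_div]
      gcongr
      calc |z ^ n - w ^ n| ≤ |z - w| * n * max |z| |w| ^ (n - 1) := abs_pow_sub_pow_le z w n
        _ ≤ |z - w| * (n + 1) * M ^ n := by
          gcongr
          · linarith
          · calc max |z| |w| ^ (n - 1) ≤ M ^ (n - 1) := by gcongr; exact max_le h h'
              _ ≤ M ^ n := pow_le_pow_right₀ hM (Nat.sub_le _ _)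
        _ = _ := by ring
    have := tsum_of_norm_bounded (hs.mul_right |z - w|).hasSum key
    rw [Real.norm_eq_abs, (hz z h).tsum_sub (hz w h'), tsum_mul_right] at this
    unfold mlf
    nlinarith [abs_nonneg (z - w)]

/-! ### The kernel near the origin -/

/-- Mean-value bounds for the powers `α` and `α - 1`, without the factors `α` and `1 - α`. -/
lemma rpow_sub_le {α x h : ℝ} (hα : α ∈ Ioo (0:ℝ) 1) (hx : 0 < x) (hh : 0 ≤ h) :
    |(x + h) ^ α - x ^ α| ≤ h * x ^ (α - 1) ∧
    |(x + h) ^ (α - 1) - x ^ (α - 1)| ≤ h * x ^ (α - 2) := by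
  obtain ⟨h0, h1⟩ := hα
  have hxh : 0 < x + h := by linarith
  have e1 : ∀ y : ℝ, 0 < y → y ^ α = y * y ^ (α - 1) := fun y hy => by
    rw [Real.rpow_sub_one hy.ne']; field_simp
  have e2 : ∀ y : ℝ, 0 < y → y ^ (α - 1) = y * y ^ (α - 2) := fun y hy => by
    rw [show α - 2 = α - 1 - 1 by ring, Real.rpow_sub_one hy.ne' (α - 1)]; field_simp
  have m0 : x ^ α ≤ (x + h) ^ α := Real.rpow_le_rpow hx.le (by linarith) h0.le
  have m1 : (x + h) ^ (α - 1) ≤ x ^ (α - 1) :=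
    Real.rpow_le_rpow_of_nonpos hx (by linarith) (by linarith)
  constructor
  · rw [abs_of_nonneg (by linarith), e1 x hx, e1 _ hxh]
    nlinarith
  · rw [abs_sub_comm, abs_of_nonneg (by linarith)]
    -- after multiplication by `x + h`, the claim `(x - h) x^(α-2) ≤ (x + h)^(α-1)` follows from
    -- `(x² - h²) x^(α-2) ≤ x^α ≤ (x + h)^α`
    have hp : 0 < x ^ (α - 2) := Real.rpow_pos_of_pos hx _
    have hq : 0 < (x + h) ^ (α - 1) := Real.rpow_pos_of_pos hxh _
    rw [e1 x hx, e1 _ hxh, e2 x hx] at m0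
    rw [e2 x hx]
    have : (x + h) * ((x - h) * x ^ (α - 2)) ≤ (x + h) * (x + h) ^ (α - 1) := by
      nlinarith [sq_nonneg h]
    have := le_of_mul_le_mul_left this hxh
    linarith

/-- `f^{α,λ}` obeys on `(0, 1]` the size and increment bounds of the pure power `r^(α-1)`.
These are the only properties of the kernel used below. -/
lemma falpha_bounds {α lam : ℝ} (hα : α ∈ Ioo (0:ℝ) 1) (hlam : 0 < lam) :
    ∃ A > 0, (∀ r ∈ Ioc (0:ℝ) 1, |falpha α lam r| ≤ A * r ^ (α - 1)) ∧
      ∀ r h, 0 < r → 0 ≤ h → r + h ≤ 1 →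
        |falpha α lam (r + h) - falpha α lam r| ≤ A * (h * r ^ (α - 2)) := by
  obtain ⟨L, hL, hb, hlip⟩ := mlf_bounds hα.1 (show 1 ≤ lam + 1 by linarith)
  have hz : ∀ r, 0 ≤ r → r ≤ 1 → |-lam * r ^ α| ≤ lam + 1 := fun r h0 h1 => by
    have := Real.rpow_le_one h0 h1 hα.1.le
    have h3 := Real.rpow_nonneg h0 α
    rw [abs_mul, abs_neg, abs_of_pos hlam, abs_of_nonneg h3]
    nlinarith
  refine ⟨lam * L * (1 + lam), by positivity, fun r hr => ?_, fun r h hr hh h1 => ?_⟩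
  · have hp : 0 < r ^ (α - 1) := Real.rpow_pos_of_pos hr.1 _
    have := hb _ (hz r hr.1.le hr.2)
    unfold falpha
    rw [abs_mul, abs_mul, abs_of_pos hlam, abs_of_pos hp]
    calc lam * r ^ (α - 1) * |mlf α α (-lam * r ^ α)| ≤ lam * r ^ (α - 1) * L := by gcongr
      _ ≤ lam * r ^ (α - 1) * L * (1 + lam) := by
        refine le_mul_of_one_le_right (by positivity) (by linarith)
      _ = _ := by ring
  · obtain ⟨d0, d1⟩ := rpow_sub_le hα hr hh
    have hp : 0 < r ^ (α - 1) := Real.rpow_pos_of_pos hr _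
    have hp2 : 0 < r ^ (α - 2) := Real.rpow_pos_of_pos hr _
    have b1 := hb _ (hz (r + h) (by linarith) h1)
    have b2 := hlip _ _ (hz (r + h) (by linarith) h1) (hz r hr.le (by linarith))
    have e : -lam * (r + h) ^ α - -lam * r ^ α = -(lam * ((r + h) ^ α - r ^ α)) := by ring
    rw [e, abs_neg, abs_mul, abs_of_pos hlam] at b2
    have hpp : r ^ (α - 1) * r ^ (α - 1) ≤ r ^ (α - 2) := by
      rw [← Real.rpow_add hr]
      exact Real.rpow_le_rpow_of_exponent_ge hr (by linarith) (by linarith [hα.1])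
    -- one term for the increment of the power, one for the increment of the Mittag-Leffler factor
    have split : falpha α lam (r + h) - falpha α lam r
        = lam * (((r + h) ^ (α - 1) - r ^ (α - 1)) * mlf α α (-lam * (r + h) ^ α))
          + lam * (r ^ (α - 1) * (mlf α α (-lam * (r + h) ^ α) - mlf α α (-lam * r ^ α))) := by
      unfold falpha; ring
    rw [split]
    refine (abs_add_le _ _).trans ?_
    simp only [abs_mul, abs_of_pos hlam, abs_of_pos hp]
    calc lam * (|(r + h) ^ (α - 1) - r ^ (α - 1)| * |mlf α α (-lam * (r + h) ^ α)|)
          + lam * (r ^ (α - 1) * |mlf α α (-lam * (r + h) ^ α) - mlf α α (-lam * r ^ α)|)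
        ≤ lam * ((h * r ^ (α - 2)) * L)
          + lam * (r ^ (α - 1) * (L * (lam * (h * r ^ (α - 1))))) := by
          gcongr
          exact b2.trans (by gcongr)
      _ = lam * L * h * r ^ (α - 2) + lam * L * lam * h * (r ^ (α - 1) * r ^ (α - 1)) := by ring
      _ ≤ lam * L * h * r ^ (α - 2) + lam * L * lam * h * r ^ (α - 2) := by gcongr
      _ = _ := by ring

/-! ### Convolution with a weakly singular kernel -/

lemma continuousOn_of_bounds {α A : ℝ} {K : ℝ → ℝ} (hα : α ∈ Ioo (0:ℝ) 1)
    (hKd : ∀ r h, 0 < r → 0 ≤ h → r + h ≤ 1 → |K (r + h) - K r| ≤ A * (h * r ^ (α - 2))) :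
    ContinuousOn K (Ioc 0 1) := by
  intro x hx
  have hx0 : 0 < x / 2 := half_pos hx.1
  -- on `[x/2, 1]` the increment bound makes `K` Lipschitz
  have hA : 0 ≤ A * (x / 2) ^ (α - 2) := by
    have := (abs_nonneg _).trans (hKd (x / 2) (x / 2) hx0 hx0.le (by linarith [hx.2]))
    have h3 : 0 ≤ A * (x / 2) ^ (α - 2) * (x / 2) := by linarith
    exact nonneg_of_mul_nonneg_left h3 hx0
  have hA' : 0 ≤ A := nonneg_of_mul_nonneg_left hA (by positivity)
  have hlip : LipschitzOnWith (Real.toNNReal (A * (x / 2) ^ (α - 2))) K (Icc (x / 2) 1) := by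
    refine LipschitzOnWith.of_dist_le_mul fun u hu v hv => ?_
    rw [Real.coe_toNNReal _ hA, Real.dist_eq, Real.dist_eq]
    have main : ∀ u ∈ Icc (x / 2) 1, ∀ v ∈ Icc (x / 2) 1, u ≤ v →
        |K u - K v| ≤ A * (x / 2) ^ (α - 2) * |u - v| := by
      intro u hu v hv huv
      have hu0 : 0 < u := hx0.trans_le hu.1
      have := hKd u (v - u) hu0 (by linarith) (by linarith [hv.2])
      rw [add_sub_cancel, abs_sub_comm] at this
      rw [abs_sub_comm u v, abs_of_nonneg (sub_nonneg.2 huv)]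
      refine this.trans ?_
      have h2 : u ^ (α - 2) ≤ (x / 2) ^ (α - 2) :=
        Real.rpow_le_rpow_of_nonpos hx0 hu.1 (by linarith [hα.2])
      have h3 : 0 ≤ v - u := by linarith
      calc A * ((v - u) * u ^ (α - 2)) ≤ A * ((v - u) * (x / 2) ^ (α - 2)) := by gcongr
        _ = _ := by ring
    rcases le_total u v with h | h
    · exact main u hu v hv h
    · rw [abs_sub_comm, abs_sub_comm u v]
      exact main v hv u hu h
  refine (hlip.continuousOn x ⟨by linarith, hx.2⟩).mono_of_mem_nhdsWithin ?_
  rw [mem_nhdsWithin]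
  exact ⟨Ioi (x / 2), isOpen_Ioi, by simp [hx.1], fun y hy => ⟨le_of_lt hy.1, hy.2.2⟩⟩

lemma kernel_integrable {α A : ℝ} {K : ℝ → ℝ} (hα : α ∈ Ioo (0:ℝ) 1)
    (hK : ∀ r ∈ Ioc (0:ℝ) 1, |K r| ≤ A * r ^ (α - 1))
    (hKd : ∀ r h, 0 < r → 0 ≤ h → r + h ≤ 1 → |K (r + h) - K r| ≤ A * (h * r ^ (α - 2)))
    {a b : ℝ} (ha : a ∈ Icc (0:ℝ) 1) (hb : b ∈ Icc (0:ℝ) 1) :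
    IntervalIntegrable K volume a b := by
  have h01 : IntervalIntegrable K volume 0 1 := by
    have hp : IntervalIntegrable (fun r : ℝ => A * r ^ (α - 1)) volume 0 1 :=
      (intervalIntegral.intervalIntegrable_rpow' (by linarith [hα.1])).const_mul A
    rw [intervalIntegrable_iff_integrableOn_Ioc_of_le zero_le_one] at hp ⊢
    refine Integrable.mono' hp
      ((continuousOn_of_bounds hα hKd).aestronglyMeasurable measurableSet_Ioc) ?_
    filter_upwards [ae_restrict_mem measurableSet_Ioc] with r hr
    exact hK r hr
  refine h01.mono_set (uIcc_subset_uIcc ?_ ?_) <;> rwa [uIcc_of_le zero_le_one]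

lemma conv_integrable {α A : ℝ} {K g : ℝ → ℝ} (hα : α ∈ Ioo (0:ℝ) 1)
    (hK : ∀ r ∈ Ioc (0:ℝ) 1, |K r| ≤ A * r ^ (α - 1))
    (hKd : ∀ r h, 0 < r → 0 ≤ h → r + h ≤ 1 → |K (r + h) - K r| ≤ A * (h * r ^ (α - 2)))
    (hg : ContinuousOn g (Icc 0 1)) {a b t : ℝ} (ha : 0 ≤ a) (hab : a ≤ b) (hbt : b ≤ t)
    (ht : t ≤ 1) :
    IntervalIntegrable (fun r => K r * g (t - r)) volume a b := by
  refine (kernel_integrable hα hK hKd ⟨ha, by linarith⟩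
    ⟨by linarith, by linarith⟩).mul_continuousOn ?_
  refine hg.comp (by fun_prop) fun r hr => ?_
  rw [uIcc_of_le hab] at hr
  exact ⟨by linarith [hr.2], by linarith [hr.1]⟩

/-- Convolution with a kernel of size `r^(α-1)` raises Hölder regularity from `β` to `α + β`, as long
as `α + β < 1` and `g 0 = 0`. With `u(t) = ∫₀ᵗ K(r) g(t - r) dr`, the increment `u(x + h) - u(x)` is
the sum of `∫₀ʰ K(r) (g(x + h - r) - g(x)) dr`, of `∫₀ˣ (K(r + h) - K(r)) (g(x - r) - g(x)) dr` and of
`g(x) ∫ₓˣ⁺ʰ K(r) dr`. The middle term is split at `r = h`; convergence of `∫ₕ^∞ r^(α+β-2) dr` is where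
`α + β < 1` enters. The last term uses `|g(x)| ≤ H x^β`. -/
lemma conv_increment {α β A H : ℝ} {K g : ℝ → ℝ} (hα : α ∈ Ioo (0:ℝ) 1) (hβ : 0 ≤ β)
    (hαβ : α + β < 1) (hA : 0 < A) (hH : 0 < H)
    (hK : ∀ r ∈ Ioc (0:ℝ) 1, |K r| ≤ A * r ^ (α - 1))
    (hKd : ∀ r h, 0 < r → 0 ≤ h → r + h ≤ 1 → |K (r + h) - K r| ≤ A * (h * r ^ (α - 2)))
    (hg : ContinuousOn g (Icc 0 1)) (hg0 : g 0 = 0)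
    (hgH : ∀ x ∈ Icc (0:ℝ) 1, ∀ y ∈ Icc (0:ℝ) 1, |g x - g y| ≤ H * |x - y| ^ β)
    {x h : ℝ} (hx : 0 ≤ x) (hh : 0 < h) (hxh : x + h ≤ 1) :
    |(∫ s in (0:ℝ)..(x + h), K (x + h - s) * g s) - ∫ s in (0:ℝ)..x, K (x - s) * g s| ≤
      A * H * (2 / α + 2 / (α + β) + 1 / (1 - (α + β))) * h ^ (α + β) := by
  have hα0 := hα.1
  have hα1 := hα.2
  have hs0 : 0 < α + β := by linarith
  have KI : ∀ {a b : ℝ}, 0 ≤ a → a ≤ b → b ≤ 1 → IntervalIntegrable K volume a b :=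
    fun h1 h2 h3 => kernel_integrable hα hK hKd ⟨h1, h2.trans h3⟩ ⟨h1.trans h2, h3⟩
  -- the substitution `r = t - s`
  have sub1 : ∀ t, (∫ s in (0:ℝ)..t, K (t - s) * g s) = ∫ r in (0:ℝ)..t, K r * g (t - r) := by
    intro t
    have := intervalIntegral.integral_comp_sub_left (a := 0) (b := t)
      (fun r => K r * g (t - r)) t
    simpa using this
  have I0 := conv_integrable hα hK hKd hg (t := x + h) le_rfl hh.le (by linarith) hxh
  have I1 := conv_integrable hα hK hKd hg (t := x + h) (a := h) (b := x + h) hh.le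
    (by linarith) le_rfl hxh
  have I2 := conv_integrable hα hK hKd hg (t := x) le_rfl hx le_rfl (by linarith)
  have I3 : IntervalIntegrable (fun r => K (r + h) * g (x - r)) volume 0 x := by
    have := I1.comp_add_right h
    simpa [add_sub_add_right_eq_sub] using this
  have I4 : IntervalIntegrable (fun r => K (r + h)) volume 0 x := by
    have := (KI hh.le (show h ≤ x + h by linarith) hxh).comp_add_right h
    simpa using this
  have KIh := KI le_rfl hh.le (by linarith)
  have KIx := KI le_rfl hx (by linarith)
  have shift : ∀ f : ℝ → ℝ, (∫ r in (0:ℝ)..x, f (r + h)) = ∫ r in h..(x + h), f r := by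
    intro f
    simp
  have e1 : (∫ r in h..(x + h), K r * g (x + h - r)) = ∫ r in (0:ℝ)..x, K (r + h) * g (x - r) := by
    rw [← shift]
    simp [add_sub_add_right_eq_sub]
  have T : (∫ s in (0:ℝ)..(x + h), K (x + h - s) * g s) - ∫ s in (0:ℝ)..x, K (x - s) * g s
      = (∫ r in (0:ℝ)..h, K r * (g (x + h - r) - g x))
        + (∫ r in (0:ℝ)..x, (K (r + h) - K r) * (g (x - r) - g x))
        + g x * ∫ r in x..(x + h), K r := by
    have a1 : (∫ r in (0:ℝ)..h, K r * (g (x + h - r) - g x))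
        = (∫ r in (0:ℝ)..h, K r * g (x + h - r)) - (∫ r in (0:ℝ)..h, K r) * g x := by
      simp_rw [mul_sub]
      rw [intervalIntegral.integral_sub I0 (KIh.mul_const _), intervalIntegral.integral_mul_const]
    have a2 : (∫ r in (0:ℝ)..x, (K (r + h) - K r) * (g (x - r) - g x))
        = (∫ r in (0:ℝ)..x, K (r + h) * g (x - r)) - (∫ r in (0:ℝ)..x, K r * g (x - r))
          - ((∫ r in h..(x + h), K r) - ∫ r in (0:ℝ)..x, K r) * g x := by
      have : ∀ r, (K (r + h) - K r) * (g (x - r) - g x)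
        = K (r + h) * g (x - r) - K r * g (x - r) - (K (r + h) - K r) * g x := fun r => by ring
      simp_rw [this]
      rw [intervalIntegral.integral_sub (I3.sub I2) ((I4.sub KIx).mul_const _),
        intervalIntegral.integral_sub I3 I2, intervalIntegral.integral_mul_const,
        intervalIntegral.integral_sub I4 KIx, shift K]
    have a3 := intervalIntegral.integral_add_adjacent_intervals KIh
      (KI hh.le (show h ≤ x + h by linarith) hxh)
    have a4 := intervalIntegral.integral_add_adjacent_intervals KIx
      (KI hx (show x ≤ x + h by linarith) hxh)
    rw [sub1, sub1, ← intervalIntegral.integral_add_adjacent_intervals I0 I1, e1, a1, a2]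
    linear_combination (a3 - a4) * g x
  have powI : ∀ {p a b : ℝ}, -1 < p → IntervalIntegrable (fun r : ℝ => r ^ p) volume a b :=
    fun hp => intervalIntegral.intervalIntegrable_rpow' hp
  have hhp : 0 < h ^ (α + β) := Real.rpow_pos_of_pos hh _
  have B1 : |∫ r in (0:ℝ)..h, K r * (g (x + h - r) - g x)| ≤ A * H / α * h ^ (α + β) := by
    have := intervalIntegral.norm_integral_le_of_norm_le hh.le
      (f := fun r => K r * (g (x + h - r) - g x))
      (g := fun r => A * H * h ^ β * r ^ (α - 1))
      (ae_of_all _ fun r hr => ?_) ((powI (by linarith)).const_mul _)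
    · rw [intervalIntegral.integral_const_mul, integral_rpow (Or.inl (by linarith)),
        sub_add_cancel, Real.zero_rpow hα0.ne', sub_zero, Real.norm_eq_abs] at this
      refine this.trans (le_of_eq ?_)
      rw [Real.rpow_add hh]
      ring
    · rw [Real.norm_eq_abs, abs_mul]
      have h1 := hK r ⟨hr.1, by linarith [hr.2]⟩
      have h2 := hgH (x + h - r) ⟨by linarith [hr.2], by linarith [hr.1]⟩ x ⟨hx, by linarith⟩
      have h3 : |x + h - r - x| ^ β ≤ h ^ β := by
        refine Real.rpow_le_rpow (abs_nonneg _) ?_ hβ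
        rw [abs_of_nonneg (by linarith [hr.2])]
        linarith [hr.1]
      have hp : 0 < r ^ (α - 1) := Real.rpow_pos_of_pos hr.1 _
      calc |K r| * |g (x + h - r) - g x| ≤ (A * r ^ (α - 1)) * (H * h ^ β) := by
            gcongr
            exact h2.trans (by gcongr)
        _ = _ := by ring
  have gx : ∀ r ∈ Ioc 0 x, |g (x - r) - g x| ≤ H * r ^ β := by
    intro r hr
    have := hgH (x - r) ⟨by linarith [hr.2], by linarith [hr.1]⟩ x ⟨hx, by linarith⟩
    rwa [sub_sub_cancel_left, abs_neg, abs_of_pos hr.1] at this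
  have B2 : |∫ r in (0:ℝ)..x, (K (r + h) - K r) * (g (x - r) - g x)|
      ≤ A * H * (2 / (α + β) + 1 / (1 - (α + β))) * h ^ (α + β) := by
    -- near the singularity the two kernel values are estimated separately
    have near : ∀ k, 0 ≤ k → k ≤ h → k ≤ x →
        |∫ r in (0:ℝ)..k, (K (r + h) - K r) * (g (x - r) - g x)|
          ≤ A * H * (2 / (α + β)) * h ^ (α + β) := by
      intro k hk0 hkh hkx
      have := intervalIntegral.norm_integral_le_of_norm_le hk0
        (f := fun r => (K (r + h) - K r) * (g (x - r) - g x))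
        (g := fun r => 2 * A * H * r ^ (α + β - 1))
        (ae_of_all _ fun r hr => ?_) ((powI (by linarith)).const_mul _)
      · rw [intervalIntegral.integral_const_mul, integral_rpow (Or.inl (by linarith)),
          sub_add_cancel, Real.zero_rpow hs0.ne', sub_zero, Real.norm_eq_abs] at this
        refine this.trans ?_
        have hkp : k ^ (α + β) ≤ h ^ (α + β) := Real.rpow_le_rpow hk0 hkh hs0.le
        calc 2 * A * H * (k ^ (α + β) / (α + β)) ≤ 2 * A * H * (h ^ (α + β) / (α + β)) := by gcongr
          _ = _ := by ring
      · have hrx : r ≤ x := hr.2.trans hkx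
        rw [Real.norm_eq_abs, abs_mul]
        have h1 := hK r ⟨hr.1, by linarith⟩
        have h2 := hK (r + h) ⟨by linarith [hr.1], by linarith⟩
        have h3 : (r + h) ^ (α - 1) ≤ r ^ (α - 1) :=
          Real.rpow_le_rpow_of_nonpos hr.1 (by linarith) (by linarith)
        have h4 : |K (r + h) - K r| ≤ 2 * A * r ^ (α - 1) := by
          refine (abs_sub _ _).trans ?_
          nlinarith
        have hp : 0 < r ^ (α - 1) := Real.rpow_pos_of_pos hr.1 _
        calc |K (r + h) - K r| * |g (x - r) - g x|
            ≤ (2 * A * r ^ (α - 1)) * (H * r ^ β) := by gcongr; exact gx r ⟨hr.1, hrx⟩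
          _ = 2 * A * H * (r ^ (α - 1) * r ^ β) := by ring
          _ = _ := by rw [← Real.rpow_add hr.1]; ring_nf
    have hrest : 0 ≤ A * H * (1 / (1 - (α + β))) * h ^ (α + β) := by
      have : 0 < 1 - (α + β) := by linarith
      positivity
    rcases le_total x h with hle | hle
    · have := near x hx hle le_rfl
      linarith
    · have I5 : IntervalIntegrable (fun r => (K (r + h) - K r) * (g (x - r) - g x)) volume 0 x := by
        refine (I4.sub KIx).mul_continuousOn ?_
        refine ContinuousOn.sub (hg.comp (by fun_prop) fun r hr => ?_) continuousOn_const
        rw [uIcc_of_le hx] at hr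
        exact ⟨by linarith [hr.2], by linarith [hr.1]⟩
      -- away from the singularity the increment bound on `K` gains a factor `h / r`
      have far : |∫ r in h..x, (K (r + h) - K r) * (g (x - r) - g x)|
          ≤ A * H * (1 / (1 - (α + β))) * h ^ (α + β) := by
        have hnot : (0:ℝ) ∉ uIcc h x := by
          rw [uIcc_of_le hle]; exact fun hc => absurd hc.1 (not_le.2 hh)
        have := intervalIntegral.norm_integral_le_of_norm_le hle
          (f := fun r => (K (r + h) - K r) * (g (x - r) - g x))
          (g := fun r => A * H * h * r ^ (α + β - 2))
          (ae_of_all _ fun r hr => ?_)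
          ((intervalIntegral.intervalIntegrable_rpow (μ := volume) (Or.inr hnot)).const_mul _)
        · rw [intervalIntegral.integral_const_mul,
            integral_rpow (Or.inr ⟨by linarith, hnot⟩), Real.norm_eq_abs] at this
          refine this.trans ?_
          have e : α + β - 2 + 1 = α + β - 1 := by ring
          rw [e]
          have hxp : 0 < x ^ (α + β - 1) := Real.rpow_pos_of_pos (hh.trans_le hle) _
          have eh : h ^ (α + β) = h * h ^ (α + β - 1) := by
            rw [Real.rpow_sub_one hh.ne']; field_simp
          have hd : 0 < 1 - (α + β) := by linarith
          have : (x ^ (α + β - 1) - h ^ (α + β - 1)) / (α + β - 1)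
              ≤ h ^ (α + β - 1) / (1 - (α + β)) := by
            rw [← neg_div_neg_eq, neg_sub, neg_sub]
            gcongr
            linarith
          calc A * H * h * ((x ^ (α + β - 1) - h ^ (α + β - 1)) / (α + β - 1))
              ≤ A * H * h * (h ^ (α + β - 1) / (1 - (α + β))) := by gcongr
            _ = _ := by rw [eh]; ring
        · have hr0 : 0 < r := hh.trans hr.1
          rw [Real.norm_eq_abs, abs_mul]
          have h4 := hKd r h hr0 hh.le (by linarith [hr.2])
          have hp : 0 < r ^ (α - 2) := Real.rpow_pos_of_pos hr0 _
          calc |K (r + h) - K r| * |g (x - r) - g x|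
              ≤ (A * (h * r ^ (α - 2))) * (H * r ^ β) := by gcongr; exact gx r ⟨hr0, hr.2⟩
            _ = A * H * h * (r ^ (α - 2) * r ^ β) := by ring
            _ = _ := by rw [← Real.rpow_add hr0]; ring_nf
      have hn := near h hh.le le_rfl hle
      have m1 : h ∈ uIcc 0 x := by rw [uIcc_of_le hx]; exact ⟨hh.le, hle⟩
      rw [← intervalIntegral.integral_add_adjacent_intervals
        (I5.mono_set (uIcc_subset_uIcc left_mem_uIcc m1))
        (I5.mono_set (uIcc_subset_uIcc m1 right_mem_uIcc))]
      refine (abs_add_le _ _).trans ?_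
      linarith
  have B3 : |g x * ∫ r in x..(x + h), K r| ≤ A * H / α * h ^ (α + β) := by
    have := intervalIntegral.norm_integral_le_of_norm_le (show x ≤ x + h by linarith)
      (f := K) (g := fun r => A * r ^ (α - 1))
      (ae_of_all _ fun r hr => hK r ⟨by linarith [hr.1], by linarith [hr.2]⟩)
      ((powI (p := α - 1) (by linarith)).const_mul _)
    rw [intervalIntegral.integral_const_mul, integral_rpow (Or.inl (by linarith)),
        sub_add_cancel, Real.norm_eq_abs] at this
    have hgx : |g x| ≤ H * x ^ β := by
      have := hgH x ⟨hx, by linarith⟩ 0 ⟨le_rfl, zero_le_one⟩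
      rwa [hg0, sub_zero, sub_zero, abs_of_nonneg hx] at this
    -- `x^β ((x+h)^α - x^α) ≤ (x+h)^(α+β) - x^(α+β) ≤ h^(α+β)`
    have hsub : x ^ β * ((x + h) ^ α - x ^ α) ≤ h ^ (α + β) := by
      have c1 := Real.rpow_add_le_add_rpow hx hh.le hs0.le hαβ.le
      have c2 : x ^ (α + β) = x ^ α * x ^ β := Real.rpow_add_of_nonneg hx hα0.le hβ
      have c3 : (x + h) ^ (α + β) = (x + h) ^ α * (x + h) ^ β :=
        Real.rpow_add_of_nonneg (by linarith) hα0.le hβ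
      have c4 : x ^ β ≤ (x + h) ^ β := Real.rpow_le_rpow hx (by linarith) hβ
      have c5 : 0 ≤ (x + h) ^ α := Real.rpow_nonneg (by linarith) _
      nlinarith
    rw [abs_mul]
    have hxβ : 0 ≤ x ^ β := Real.rpow_nonneg hx _
    calc |g x| * |∫ r in x..(x + h), K r|
        ≤ (H * x ^ β) * (A * (((x + h) ^ α - x ^ α) / α)) := by gcongr
      _ = A * H / α * (x ^ β * ((x + h) ^ α - x ^ α)) := by ring
      _ ≤ _ := by gcongr
  rw [T]
  refine (abs_add_le _ _).trans ((add_le_add ((abs_add_le _ _).trans (add_le_add B1 B2)) B3).trans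
    (le_of_eq ?_))
  ring

/-! ### Hölder exponents and the bootstrap -/

/-- No sign condition on the exponents is needed: on the diagonal the left-hand side vanishes and
`0 ^ γ' ≥ 0` for every real `γ'`, while off the diagonal `0 < |x - y| ≤ 1`. -/
lemma HolderOn.of_le {f : ℝ → ℝ} {γ γ' : ℝ} (hf : HolderOn f γ (Icc 0 1)) (h : γ' ≤ γ) :
    HolderOn f γ' (Icc 0 1) := by
  obtain ⟨C, hC, hf⟩ := hf
  refine ⟨C, hC, fun x hx y hy => ?_⟩
  rcases eq_or_ne x y with rfl | hne
  · rw [sub_self, abs_zero]; positivity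
  · refine (hf x hx y hy).trans ?_
    have h0 : 0 < |x - y| := abs_pos.2 (sub_ne_zero.2 hne)
    have h1 : |x - y| ≤ 1 := abs_le.2 ⟨by linarith [hx.1, hy.2], by linarith [hx.2, hy.1]⟩
    exact mul_le_mul_of_nonneg_left (Real.rpow_le_rpow_of_exponent_ge h0 h1 h) hC.le

lemma HolderOn.conv {α β lam : ℝ} {g : ℝ → ℝ} (hα : α ∈ Ioo (0:ℝ) 1) (hlam : 0 < lam)
    (hβ : 0 ≤ β) (hαβ : α + β < 1) (hg : ContinuousOn g (Icc 0 1)) (hg0 : g 0 = 0)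
    (hgH : HolderOn g β (Icc 0 1)) :
    HolderOn (fun t => ∫ s in (0:ℝ)..t, falpha α lam (t - s) * g s) (α + β) (Icc 0 1) := by
  obtain ⟨A, hA, hK, hKd⟩ := falpha_bounds hα hlam
  obtain ⟨H, hH, hgH⟩ := hgH
  have hd : 0 < 1 - (α + β) := by linarith
  have hα0 := hα.1
  refine ⟨A * H * (2 / α + 2 / (α + β) + 1 / (1 - (α + β))), by positivity, ?_⟩
  have main : ∀ x ∈ Icc (0:ℝ) 1, ∀ y ∈ Icc (0:ℝ) 1, x < y →
      |(∫ s in (0:ℝ)..y, falpha α lam (y - s) * g s) -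
        ∫ s in (0:ℝ)..x, falpha α lam (x - s) * g s| ≤
        A * H * (2 / α + 2 / (α + β) + 1 / (1 - (α + β))) * |y - x| ^ (α + β) := by
    intro x hx y hy hxy
    have := conv_increment hα hβ hαβ hA hH hK hKd hg hg0 hgH hx.1 (sub_pos.2 hxy)
      (by linarith [hy.2])
    rwa [add_sub_cancel, ← abs_of_pos (sub_pos.2 hxy)] at this
  intro x hx y hy
  rcases lt_trichotomy x y with h | rfl | h
  · rw [abs_sub_comm, abs_sub_comm x y]
    exact main x hx y hy h
  · rw [sub_self, abs_zero]; positivity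
  · exact main y hy x hx h

/-- Any `b < 1/2 ∧ α` is strictly improved by the bootstrap map `β ↦ (α + β) / 2`, evaluated at some
admissible `β` that is either `0` or strictly below `b`. -/
lemma exists_exponent {α b : ℝ} (hα : α ∈ Ioo (0:ℝ) 1) (hb : b < min (1 / 2) α) :
    ∃ β, 0 ≤ β ∧ (β = 0 ∨ β < b) ∧ α + β < 1 ∧ b < (α + β) / 2 := by
  obtain ⟨h1, h2⟩ := lt_min_iff.1 hb
  rcases lt_or_ge (2 * b) α with h | h
  · exact ⟨0, le_rfl, Or.inl rfl, by linarith [hα.2], by linarith⟩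
  · obtain ⟨β, l, u⟩ := exists_between (show 2 * b - α < min b (1 - α) from
      lt_min (by linarith) (by linarith))
    obtain ⟨u1, u2⟩ := lt_min_iff.1 u
    exact ⟨β, by linarith, Or.inr u1, by linarith, by linarith⟩

/-- under the same assumptions as Statement 16, for every `ε > 0` the
function `t ↦ B(X_t)` has Hölder regularity `(1/2 ∧ α) - ε` on `[0,1]`. -/
theorem holder_regularity_Z (α lam c : ℝ) (hα : α ∈ Set.Ioo (0:ℝ) 1) (hlam : 0 < lam)
    (hc : 0 ≤ c)
    (B : ℝ → ℝ) (hB0 : B 0 = 0)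
    (hBhold : ∀ ε > (0:ℝ), ∀ R > (0:ℝ), HolderOn B (1 / 2 - ε) (Set.Icc 0 R))
    (X : ℝ → ℝ) (hXcont : ContinuousOn X (Set.Icc 0 1))
    (hXmono : MonotoneOn X (Set.Icc 0 1)) (hX0 : X 0 = 0)
    (hX : ∀ t ∈ Set.Icc (0:ℝ) 1,
      X t = (∫ s in (0:ℝ)..t, s * falpha α lam (t - s))
            + c * ∫ s in (0:ℝ)..t, falpha α lam (t - s) * B (X s)) :
    ∀ ε > 0, HolderOn (fun t => B (X t)) (min (1 / 2) α - ε) (Set.Icc 0 1) := by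
  -- `X` takes values in `[0, R]`; the `+ 1` covers `X 1 = 0`
  set R : ℝ := X 1 + 1
  have m0 : (0:ℝ) ∈ Icc (0:ℝ) 1 := ⟨le_rfl, zero_le_one⟩
  have m1 : (1:ℝ) ∈ Icc (0:ℝ) 1 := ⟨zero_le_one, le_rfl⟩
  have hXR : ∀ t ∈ Icc (0:ℝ) 1, X t ∈ Icc 0 R := fun t ht =>
    ⟨hX0 ▸ hXmono m0 ht ht.1, (hXmono ht m1 ht.2).trans (by simp [R])⟩
  have hR : 0 < R := by
    have := (hXR 1 m1).1
    simp only [R]; linarith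
  have hBcont : ContinuousOn B (Icc 0 R) := by
    obtain ⟨C, hC, hB⟩ := hBhold (1 / 4) (by norm_num) R hR
    intro x hx
    rw [ContinuousWithinAt, tendsto_iff_dist_tendsto_zero]
    have hlim : Tendsto (fun y : ℝ => C * |y - x| ^ (1 / 2 - 1 / 4 : ℝ)) (nhdsWithin x (Icc 0 R))
        (nhds 0) := by
      have : ContinuousAt (fun y : ℝ => C * |y - x| ^ (1 / 2 - 1 / 4 : ℝ)) x := by
        refine continuousAt_const.mul (ContinuousAt.rpow_const (by fun_prop) (Or.inr (by norm_num)))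
      have h2 := this.tendsto.mono_left (nhdsWithin_le_nhds (s := Icc 0 R))
      rw [sub_self, abs_zero, Real.zero_rpow (by norm_num), mul_zero] at h2
      exact h2
    refine squeeze_zero' (Eventually.of_forall fun _ => dist_nonneg) ?_ hlim
    filter_upwards [self_mem_nhdsWithin] with y hy
    exact hB y hy x hx
  have hZcont : ContinuousOn (fun t => B (X t)) (Icc 0 1) := hBcont.comp hXcont hXR
  have hZ0 : (fun t => B (X t)) 0 = 0 := by simp [hX0, hB0]
  have hid : HolderOn (fun t => t) 1 (Icc 0 1) := ⟨1, one_pos, fun x _ y _ => by simp⟩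
  -- the convolution gains `α` derivatives (both for the drift `s ↦ s` and for `B ∘ X`)
  have stepX : ∀ β, 0 ≤ β → α + β < 1 → HolderOn (fun t => B (X t)) β (Icc 0 1) →
      HolderOn X (α + β) (Icc 0 1) := by
    intro β hβ hαβ hZ
    obtain ⟨C1, hC1, h1⟩ := HolderOn.conv hα hlam hβ hαβ continuousOn_id rfl
      (hid.of_le (show β ≤ 1 by linarith [hα.1]))
    obtain ⟨C2, hC2, h2⟩ := HolderOn.conv hα hlam hβ hαβ hZcont hZ0 hZ
    refine ⟨C1 + c * C2, by positivity, fun x hx y hy => ?_⟩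
    rw [hX x hx, hX y hy]
    simp_rw [mul_comm _ (falpha α lam _)]
    have k1 := h1 x hx y hy
    have k2 := h2 x hx y hy
    simp only [id] at k1
    rw [add_sub_add_comm, ← mul_sub]
    refine (abs_add_le _ _).trans ?_
    rw [abs_mul, abs_of_nonneg hc, add_mul, mul_assoc]
    gcongr
  -- composition with `B` multiplies the exponent by any `κ < 1/2`
  have stepZ : ∀ κ a, 0 ≤ κ → κ < 1 / 2 → HolderOn X a (Icc 0 1) →
      HolderOn (fun t => B (X t)) (a * κ) (Icc 0 1) := by
    rintro κ a hκ0 hκ ⟨C, hC, h⟩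
    obtain ⟨D, hD, hB⟩ := hBhold (1 / 2 - κ) (by linarith) R hR
    rw [sub_sub_cancel] at hB
    refine ⟨D * C ^ κ, by positivity, fun x hx y hy => ?_⟩
    refine (hB _ (hXR x hx) _ (hXR y hy)).trans ?_
    rw [mul_assoc, Real.rpow_mul (abs_nonneg _), ← Real.mul_rpow hC.le (by positivity)]
    gcongr
    exact h x hx y hy
  have base : HolderOn (fun t => B (X t)) 0 (Icc 0 1) := by
    have := stepZ 0 0 le_rfl (by norm_num) ?_
    · simpa using this
    refine ⟨R, hR, fun x hx y hy => ?_⟩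
    have := hXR x hx
    have := hXR y hy
    rw [Real.rpow_zero, mul_one, abs_le]
    constructor <;> linarith [(hXR x hx).1, (hXR x hx).2, (hXR y hy).1, (hXR y hy).2]
  have main : ∀ γ, 0 ≤ γ → γ < min (1 / 2) α → HolderOn (fun t => B (X t)) γ (Icc 0 1) := by
    intro γ hγ0 hγ
    -- the supremum of the exponents reached so far, which need not be attained
    set T : Set ℝ := {β | β ≤ γ ∧ HolderOn (fun t => B (X t)) β (Icc 0 1)} with hT
    have hTb : BddAbove T := ⟨γ, fun β hβ => hβ.1⟩
    have hzero : (0:ℝ) ∈ T := ⟨hγ0, base⟩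
    have hb0 : 0 ≤ sSup T := le_csSup hTb hzero
    have hbγ : sSup T ≤ γ := csSup_le ⟨0, hzero⟩ fun β hβ => hβ.1
    obtain ⟨β, hβ0, hβ, hαβ, hlt⟩ := exists_exponent hα (hbγ.trans_lt hγ)
    have hZβ : HolderOn (fun t => B (X t)) β (Icc 0 1) := by
      rcases hβ with rfl | hβ
      · exact base
      · obtain ⟨β', h1, h2⟩ := exists_lt_of_lt_csSup ⟨0, hzero⟩ hβ
        exact h1.2.of_le h2.le
    have hs : 0 < α + β := by linarith [hα.1]
    obtain ⟨κ, k1, k2⟩ := exists_between (show sSup T / (α + β) < 1 / 2 by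
      rw [div_lt_iff₀ hs]; linarith)
    have hκ0 : 0 ≤ κ := (div_nonneg hb0 hs.le).trans k1.le
    rw [div_lt_iff₀ hs, mul_comm] at k1
    have hZ := stepZ κ (α + β) hκ0 k2 (stepX β hβ0 hαβ hZβ)
    rcases le_total γ ((α + β) * κ) with h | h
    · exact hZ.of_le h
    -- otherwise an exponent above the supremum has been reached
    · exact absurd (le_csSup hTb ⟨h, hZ⟩) (not_le.2 k1)
  -- for large `ε` the target exponent is negative, and exponent `0` suffices
  intro ε hε
  refine (main (max (min (1 / 2) α - ε) 0) (le_max_right _ _) (max_lt (by linarith) ?_)).of_le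
    (le_max_left _ _)
  exact lt_min (by norm_num) hα.1
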